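/- A map M admits a {0,2}-coloring if and only if its medial Med(M) admits a {1}-coloring. -/

import Mathlib

/-- A (combinatorial) map: a nonempty set of flags `Ω` together with three
permutations `r 0, r 1, r 2` which are fixed-point-free involutions, such that
`r 0` and `r 2` commute with fixed-point-free product, and such that the
connection group `⟨r 0, r 1, r 2⟩` acts transitively on `Ω`. -/
structure CMap (Ω : Type) where
  r : Fin 3 → Equiv.Perm Ω
  nonempty : Nonempty Ω
  invol : ∀ (i : Fin 3) (f : Ω), r i (r i f) = f
  fpf : ∀ (i : Fin 3) (f : Ω), r i f ≠ f
  comm02 : ∀ f : Ω, r 0 (r 2 f) = r 2 (r 0 f)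
  fpf02 : ∀ f : Ω, r 0 (r 2 f) ≠ f
  flag_transitive : ∀ f g : Ω,
    ∃ w ∈ Subgroup.closure ({r 0, r 1, r 2} : Set (Equiv.Perm Ω)), w f = g

/-- `a` is an `I`-coloring with respect to the connections `r`. -/
def IsColoringOn {Ω : Type} (r : Fin 3 → Ω → Ω) (I : Set (Fin 3)) (a : Ω → ZMod 2) : Prop :=
  ∀ (f : Ω) (j : Fin 3), (j ∈ I → a (r j f) = a f + 1) ∧ (j ∉ I → a (r j f) = a f)

/-- There exists an `I`-coloring with respect to the connections `r`. -/
def ColorableOn {Ω : Type} (r : Fin 3 → Ω → Ω) (I : Set (Fin 3)) : Prop :=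
  ∃ a : Ω → ZMod 2, IsColoringOn r I a

/-- `a` is an `I`-coloring of the map `M`. -/
def CMap.IsColoring {Ω : Type} (M : CMap Ω) (I : Set (Fin 3)) (a : Ω → ZMod 2) : Prop :=
  IsColoringOn (fun j f => M.r j f) I a

/-- The map `M` admits an `I`-coloring. -/
def CMap.Colorable {Ω : Type} (M : CMap Ω) (I : Set (Fin 3)) : Prop :=
  ∃ a : Ω → ZMod 2, M.IsColoring I a

/-- `T M` is the collection of subsets `I ⊆ {0,1,2}` for which `M` is `I`-colorable. -/
def CMap.T {Ω : Type} (M : CMap Ω) : Set (Set (Fin 3)) :=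
  {I | M.Colorable I}

/-- The connections of the medial map `Med(M)` on `Ω × ℤ/2ℤ`:
`(f,i)·s₀ = (f·r₁, i)`, `(f,0)·s₁ = (f·r₀, 0)`, `(f,1)·s₁ = (f·r₂, 1)`,
`(f,i)·s₂ = (f, 1-i)`. -/
def medialConn {Ω : Type} (M : CMap Ω) : Fin 3 → (Ω × ZMod 2) → (Ω × ZMod 2) :=
  ![fun x => (M.r 1 x.1, x.2),
    fun x => (if x.2 = 0 then M.r 0 x.1 else M.r 2 x.1, x.2),
    fun x => (x.1, 1 - x.2)]

/-!
Each `sₖ` with `k ≠ 2` acts on each of the two copies of `Ω` as some `rⱼ`, and each `rⱼ` occurs in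
this way. The remaining connection `s₂` swaps the copies, so it only decides whether the two
restrictions of a coloring of `Med(M)` agree or are complementary. Hence a `J`-coloring of `Med(M)`
amounts to a coloring `a` of `M`, via `(f, i) ↦ a f` if `2 ∉ J` and `(f, i) ↦ a f + i` if `2 ∈ J`.
-/

theorem isColoringOn_iff_indicator {Ω : Type} {r : Fin 3 → Ω → Ω} {I : Set (Fin 3)}
    {a : Ω → ZMod 2} :
    IsColoringOn r I a ↔ ∀ f j, a (r j f) = a f + I.indicator 1 j := by
  refine forall₂_congr fun f j => ?_
  by_cases hj : j ∈ I <;> simp [hj]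

/-- The index `k` of the connection `sₖ` of `Med(M)` through which the connection `rⱼ` of `M` acts
on a copy of `Ω`: `r₁` acts through `s₀`, while `r₀` and `r₂` act through `s₁`. Preimages under it
translate sets of colored indices of `Med(M)` into those of `M`. -/
def medialIndex : Fin 3 → Fin 3 := ![1, 0, 1]

theorem medialIndex_preimage_one : medialIndex ⁻¹' {1} = {0, 2} := by
  ext j
  fin_cases j <;> simp [medialIndex]

section Medial

variable {Ω : Type} (M : CMap Ω)

theorem medialConn_two (f : Ω) (i : ZMod 2) : medialConn M 2 (f, i) = (f, i + 1) := by
  simp [medialConn, CharTwo.sub_eq_add, add_comm]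

theorem exists_medialConn_medialIndex_eq (j : Fin 3) :
    ∃ i, ∀ f, medialConn M (medialIndex j) (f, i) = (M.r j f, i) := by
  refine ⟨if j = 2 then 1 else 0, fun f => ?_⟩
  fin_cases j <;> simp [medialConn, medialIndex]

theorem exists_medialIndex_eq_and_medialConn_eq {k : Fin 3} (hk : k ≠ 2) (i : ZMod 2) :
    ∃ j, medialIndex j = k ∧ ∀ f, medialConn M k (f, i) = (M.r j f, i) := by
  obtain rfl | rfl : k = 0 ∨ k = 1 := by lia
  · exact ⟨1, rfl, fun f => rfl⟩
  · by_cases hi : i = 0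
    · exact ⟨0, rfl, fun f => by simp [medialConn, hi]⟩
    · exact ⟨2, rfl, fun f => by simp [medialConn, hi]⟩

variable {M} {J : Set (Fin 3)}

theorem CMap.IsColoring.medialConn {a : Ω → ZMod 2} (ha : M.IsColoring (medialIndex ⁻¹' J) a) :
    IsColoringOn (medialConn M) J fun x => a x.1 + J.indicator 1 2 * x.2 := by
  rw [isColoringOn_iff_indicator]
  rintro ⟨f, i⟩ k
  by_cases hk : k = 2
  · subst hk
    rw [medialConn_two]
    ring
  · obtain ⟨j, rfl, hj⟩ := exists_medialIndex_eq_and_medialConn_eq M hk i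
    have haj : a (M.r j f) = a f + J.indicator 1 (medialIndex j) :=
      isColoringOn_iff_indicator.1 ha f j
    rw [hj, haj]
    ring

theorem IsColoringOn.apply_eq_add_mul {b : Ω × ZMod 2 → ZMod 2}
    (hb : IsColoringOn (medialConn M) J b) (f : Ω) (i : ZMod 2) :
    b (f, i) = b (f, 0) + J.indicator 1 2 * i := by
  have hb₁ : b (f, 1) = b (f, 0) + J.indicator 1 2 := by
    simpa [medialConn_two] using isColoringOn_iff_indicator.1 hb (f, 0) 2
  obtain rfl | rfl : i = 0 ∨ i = 1 := by decide +revert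
  · simp
  · rw [hb₁, mul_one]

theorem IsColoringOn.of_medialConn {b : Ω × ZMod 2 → ZMod 2}
    (hb : IsColoringOn (medialConn M) J b) :
    M.IsColoring (medialIndex ⁻¹' J) fun f => b (f, 0) := by
  refine isColoringOn_iff_indicator.2 fun f j => ?_
  obtain ⟨i, hi⟩ := exists_medialConn_medialIndex_eq M j
  have hbi : b (M.r j f, i) = b (f, i) + J.indicator 1 (medialIndex j) := by
    simpa only [hi] using isColoringOn_iff_indicator.1 hb (f, i) (medialIndex j)
  rw [hb.apply_eq_add_mul, hb.apply_eq_add_mul f, add_right_comm] at hbi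
  exact add_right_cancel hbi

variable (M J)

theorem colorable_02_iff_medial_colorable_one_general :
    M.Colorable (medialIndex ⁻¹' J) ↔ ColorableOn (medialConn M) J :=
  ⟨fun ⟨_, ha⟩ => ⟨_, ha.medialConn⟩, fun ⟨_, hb⟩ => ⟨_, hb.of_medialConn⟩⟩

end Medial

/-- `M` admits a `{0,2}`-coloring iff `Med(M)` admits a `{1}`-coloring. -/
theorem colorable_02_iff_medial_colorable_one {Ω : Type} (M : CMap Ω) :
    M.Colorable {0, 2} ↔ ColorableOn (medialConn M) {1} := by
  rw [← medialIndex_preimage_one]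
  exact colorable_02_iff_medial_colorable_one_general M {1}
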